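/- Let F := 1 − H⁶/48 + 3H⁷/70 − 197H⁸/4480 and C := 1 − 4H⁶/15 + 3H⁷/5 − 19H⁸/28 (the multiplicative contribution of an ordinary (2,3)-cusp). Then for every d ∈ ℚ, 8!·(the coefficient of H⁸ in e(dH)·(C − F⁸)) = −72·(28d² − 144d + 183). (This is the computation of Example 5.2 of the paper: the correction to the predegree of a degree-d curve due to an ordinary cusp, which absorbs 8 flexes.) -/

import Mathlib

open Polynomial

/-- The truncated exponential `e(dH) = ∑_{i=0}^{8} dⁱHⁱ/i!` in `ℚ[H]`. -/
noncomputable def eH (d : ℚ) : Polynomial ℚ :=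
  ∑ i ∈ Finset.range 9, C (d ^ i / (Nat.factorial i : ℚ)) * X ^ i

/-- The multiplicative contribution of one ordinary flex. -/
noncomputable def Fflex : Polynomial ℚ :=
  1 - C (1 / 48 : ℚ) * X ^ 6 + C (3 / 70 : ℚ) * X ^ 7 - C (197 / 4480 : ℚ) * X ^ 8

/-- The multiplicative contribution of an ordinary (2,3)-cusp. -/
noncomputable def Ccusp : Polynomial ℚ :=
  1 - C (4 / 15 : ℚ) * X ^ 6 + C (3 / 5 : ℚ) * X ^ 7 - C (19 / 28 : ℚ) * X ^ 8

/-!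
Both local contributions are `1` plus terms of order at least `6`, so the quadratic part of the
binomial expansion of `F⁸` has order at least `12`: in degrees `6`, `7`, `8` the coefficients of
`F⁸` are `8` times those of `F`. Since `C - F⁸` has order at least `6`, only the coefficients of
`e(dH)` in degrees `0`, `1`, `2` reach the coefficient of `H⁸`.
-/

section
variable {R : Type*}

theorem coeff_mul_of_X_pow_dvd [Semiring R] (p : R[X]) {q : R[X]} {m : ℕ}
    (hq : X ^ m ∣ q) (n : ℕ) :
    (p * q).coeff (n + m) =
      ∑ ij ∈ Finset.HasAntidiagonal.antidiagonal n, p.coeff ij.1 * q.coeff (ij.2 + m) := by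
  obtain ⟨r, rfl⟩ := hq
  rw [← mul_assoc, X_pow_mul_assoc, coeff_mul_X_pow, coeff_mul]
  simp only [coeff_X_pow_mul]

theorem sq_dvd_pow_sub_one_sub_mul [CommRing R] {a f : R} (hf : a ∣ f - 1) (n : ℕ) :
    a ^ 2 ∣ f ^ n - 1 - n * (f - 1) := by
  have binomial := sq_dvd_add_pow_sub_sub (f - 1) 1 n
  rw [add_sub_cancel, one_pow, one_pow, one_mul, sub_right_comm, mul_comm] at binomial
  exact (pow_dvd_pow_of_dvd hf 2).trans binomial

theorem coeff_pow_of_X_pow_dvd_sub_one [CommRing R] {f : R[X]} {m k : ℕ}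
    (hf : X ^ m ∣ f - 1) (hk₀ : k ≠ 0) (hk : k < 2 * m) (n : ℕ) :
    (f ^ n).coeff k = n * f.coeff k := by
  have remainder_dvd : X ^ (2 * m) ∣ f ^ n - 1 - (n : R[X]) * (f - 1) := by
    simpa only [← pow_mul, mul_comm m 2] using sq_dvd_pow_sub_one_sub_mul hf n
  have remainder_coeff := X_pow_dvd_iff.mp remainder_dvd k hk
  simpa only [coeff_sub, coeff_natCast_mul, coeff_one, hk₀, if_false, sub_zero,
    sub_eq_zero] using remainder_coeff

end

theorem coeff_eH (d : ℚ) {n : ℕ} (hn : n < 9) : (eH d).coeff n = d ^ n / n.factorial := by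
  simp [eH, coeff_C_mul, coeff_X_pow, hn]

theorem coeff_add_two_eH_mul (d : ℚ) {q : ℚ[X]} {m : ℕ} (hq : X ^ m ∣ q) :
    (eH d * q).coeff (m + 2) =
      d ^ 2 / 2 * q.coeff m + d * q.coeff (m + 1) + q.coeff (m + 2) := by
  rw [add_comm m 2, coeff_mul_of_X_pow_dvd _ hq, Finset.Nat.sum_antidiagonal_eq_sum_range_succ_mk]
  have coeff_eH_zero : (eH d).coeff 0 = 1 := by simp [coeff_eH]
  have coeff_eH_one : (eH d).coeff 1 = d := by simp [coeff_eH]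
  have coeff_eH_two : (eH d).coeff 2 = d ^ 2 / 2 := by simp [coeff_eH]
  simp only [Finset.sum_range_succ, Finset.sum_range_zero, Nat.reduceSub, coeff_eH_zero,
    coeff_eH_one, coeff_eH_two, add_comm _ m, add_zero]
  ring

theorem X_pow_six_dvd_Fflex_sub_one : X ^ 6 ∣ Fflex - 1 :=
  ⟨-C (1 / 48) + C (3 / 70) * X - C (197 / 4480) * X ^ 2, by rw [Fflex]; ring⟩

theorem X_pow_six_dvd_Ccusp_sub_one : X ^ 6 ∣ Ccusp - 1 :=
  ⟨-C (4 / 15) + C (3 / 5) * X - C (19 / 28) * X ^ 2, by rw [Ccusp]; ring⟩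

theorem X_pow_six_dvd_Ccusp_sub_Fflex_pow (n : ℕ) : X ^ 6 ∣ Ccusp - Fflex ^ n := by
  have flex_dvd : X ^ 6 ∣ Fflex ^ n - 1 :=
    X_pow_six_dvd_Fflex_sub_one.trans (sub_one_dvd_pow_sub_one Fflex n)
  simpa only [sub_sub_sub_cancel_right] using dvd_sub X_pow_six_dvd_Ccusp_sub_one flex_dvd

theorem coeff_Ccusp_sub_Fflex_pow (n : ℕ) {k : ℕ} (hk₀ : k ≠ 0) (hk : k < 12) :
    (Ccusp - Fflex ^ n).coeff k = Ccusp.coeff k - n * Fflex.coeff k := by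
  rw [coeff_sub, coeff_pow_of_X_pow_dvd_sub_one X_pow_six_dvd_Fflex_sub_one hk₀ hk]

/-- Example 5.2: the correction to the predegree of a degree-`d` curve due to an ordinary
cusp, which absorbs 8 flexes. -/
theorem stmt_13 (d : ℚ) :
    (Nat.factorial 8 : ℚ) * ((eH d * (Ccusp - Fflex ^ 8)).coeff 8)
      = -72 * (28 * d ^ 2 - 144 * d + 183) := by
  have coeff_six : (Ccusp - Fflex ^ 8).coeff 6 = -1 / 10 := by
    rw [coeff_Ccusp_sub_Fflex_pow 8 (by decide) (by decide)]
    norm_num [Ccusp, Fflex, coeff_one, coeff_X_pow]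
  have coeff_seven : (Ccusp - Fflex ^ 8).coeff 7 = 9 / 35 := by
    rw [coeff_Ccusp_sub_Fflex_pow 8 (by decide) (by decide)]
    norm_num [Ccusp, Fflex, coeff_one, coeff_X_pow]
  have coeff_eight : (Ccusp - Fflex ^ 8).coeff 8 = -183 / 560 := by
    rw [coeff_Ccusp_sub_Fflex_pow 8 (by decide) (by decide)]
    norm_num [Ccusp, Fflex, coeff_one, coeff_X_pow]
  rw [coeff_add_two_eH_mul d (X_pow_six_dvd_Ccusp_sub_Fflex_pow 8), coeff_six, coeff_seven,
    coeff_eight, show Nat.factorial 8 = 40320 from rfl, Nat.cast_ofNat]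
  ring
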